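/- Let θ > 0 and, for each N ≥ 1, let α = α(N) > 0 be real and M = M(N) ≥ N an integer, with α(N)/N → α̂ ≥ 0 and M(N)/N → M̂ as N → ∞. Let y = y(N) be distributed as the β-Jacobi ensemble P_θ^{α,M,N}. Then for every positive integer k, lim_{N→∞} (1/N) E[𝔓_k(y)] = −(1/k) · (1/(2πi)) ∮ ( (v/(v+1)) · ((v − α̂)/(v − α̂ − M̂)) )^k dv, where the contour is a positively oriented circle centered at −1 of any radius r with 0 < r < 1 + α̂ + M̂ (so it encircles −1 but not α̂ + M̂). In particular the limit is independent of θ. -/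

import Mathlib

open MeasureTheory

/-- The (unnormalized) β-Jacobi density `∏_{i<j}|x_i−x_j|^{2θ} ∏_i x_i^{θα−1}(1−x_i)^{θ(M−N)+θ−1}`
with `β = 2θ`. -/
noncomputable def jacobiDensity (θ α : ℝ) (M N : ℕ) (x : Fin N → ℝ) : ℝ :=
  (∏ p ∈ Finset.univ.filter (fun p : Fin N × Fin N => p.1 < p.2),
      |x p.1 - x p.2| ^ (2 * θ)) *
    ∏ i : Fin N, (x i ^ (θ * α - 1) * (1 - x i) ^ (θ * ((M : ℝ) - (N : ℝ)) + θ - 1))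

/-- The unnormalized β-Jacobi measure on `[0,1]^N`. -/
noncomputable def jacobiMeasureRaw (θ α : ℝ) (M N : ℕ) : Measure (Fin N → ℝ) :=
  (volume.restrict (Set.univ.pi fun _ : Fin N => Set.Icc (0 : ℝ) 1)).withDensity
    fun x => ENNReal.ofReal (jacobiDensity θ α M N x)

/-- The β-Jacobi ensemble `P_θ^{α,M,N}`: the normalized β-Jacobi measure on `[0,1]^N`. -/
noncomputable def jacobiEnsemble (θ α : ℝ) (M N : ℕ) : Measure (Fin N → ℝ) :=
  (jacobiMeasureRaw θ α M N Set.univ)⁻¹ • jacobiMeasureRaw θ α M N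

namespace Jac

/-- Lebesgue measure on `[0,1]`. -/
noncomputable def lam : Measure ℝ := volume.restrict (Set.Icc (0 : ℝ) 1)

instance : IsFiniteMeasure lam := by unfold lam; infer_instance

/-- Lebesgue measure on the cube. -/
noncomputable def cube (N : ℕ) : Measure (Fin N → ℝ) := Measure.pi fun _ => lam

instance (N : ℕ) : IsFiniteMeasure (cube N) := by unfold cube; infer_instance

lemma cube_eq (N : ℕ) :
    volume.restrict (Set.univ.pi fun _ : Fin N => Set.Icc (0 : ℝ) 1) = cube N := by
  unfold cube lam
  rw [← Measure.restrict_pi_pi]; rfl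

lemma ae_cube (N : ℕ) : ∀ᵐ x ∂cube N, ∀ i, x i ∈ Set.Icc (0:ℝ) 1 := by
  rw [← cube_eq]
  filter_upwards [ae_restrict_mem (MeasurableSet.univ_pi fun _ => measurableSet_Icc)] with x hx i
  exact hx i (Set.mem_univ i)

/-- The interaction term. -/
noncomputable def vand (θ : ℝ) (N : ℕ) (x : Fin N → ℝ) : ℝ :=
  ∏ p ∈ Finset.univ.filter (fun p : Fin N × Fin N => p.1 < p.2), |x p.1 - x p.2| ^ (2 * θ)

/-- The weight. -/
noncomputable def wt (θ a b : ℝ) (N : ℕ) (x : Fin N → ℝ) : ℝ :=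
  vand θ N x * ∏ i : Fin N, (x i ^ (a - 1) * (1 - x i) ^ (b - 1))

lemma pair_split {N : ℕ} (g : Fin N → Fin N → ℝ) (hg : ∀ i j, g i j = g j i) (i : Fin N) :
    ∏ p ∈ Finset.univ.filter (fun p : Fin N × Fin N => p.1 < p.2), g p.1 p.2
      = (∏ j ∈ Finset.univ.erase i, g i j) *
        ∏ p ∈ Finset.univ.filter (fun p : Fin N × Fin N => p.1 < p.2 ∧ p.1 ≠ i ∧ p.2 ≠ i),
          g p.1 p.2 := by
  classical
  rw [← Finset.prod_filter_mul_prod_filter_not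
    (Finset.univ.filter (fun p : Fin N × Fin N => p.1 < p.2)) (fun p => p.1 = i ∨ p.2 = i)]
  congr 1
  · refine Finset.prod_bij' (fun p _ => if p.1 = i then p.2 else p.1)
      (fun j _ => if i < j then (i, j) else (j, i)) ?_ ?_ ?_ ?_ ?_
    · rintro ⟨p, q⟩ h; simp only [Finset.mem_filter, Finset.mem_univ, true_and] at h
      simp only [Finset.mem_erase, Finset.mem_univ, and_true]
      split_ifs <;> grind
    · intro j h; simp only [Finset.mem_erase, Finset.mem_univ, and_true] at h
      simp only [Finset.mem_filter, Finset.mem_univ, true_and]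
      split_ifs <;> grind
    · rintro ⟨p, q⟩ h; simp only [Finset.mem_filter, Finset.mem_univ, true_and] at h
      simp only
      split_ifs <;> grind
    · intro j h; simp only [Finset.mem_erase, Finset.mem_univ, and_true] at h
      split_ifs <;> grind
    · rintro ⟨p, q⟩ h; simp only [Finset.mem_filter, Finset.mem_univ, true_and] at h
      simp only
      split_ifs <;> grind
  · apply Finset.prod_congr _ fun _ _ => rfl
    ext p; simp only [Finset.mem_filter, Finset.mem_univ, true_and]; tauto

lemma measurable_vand (θ : ℝ) (N : ℕ) : Measurable (vand θ N) := by
  unfold vand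
  refine Finset.measurable_prod _ fun p _ => ?_
  fun_prop

lemma measurable_wt (θ a b : ℝ) (N : ℕ) : Measurable (wt θ a b N) := by
  unfold wt
  refine (measurable_vand θ N).mul (Finset.measurable_prod _ fun p _ => ?_)
  fun_prop

lemma abs_sub_le_one {s t : ℝ} (hs : s ∈ Set.Icc (0:ℝ) 1) (ht : t ∈ Set.Icc (0:ℝ) 1) :
    |s - t| ≤ 1 := by
  rw [abs_le]; constructor <;> linarith [hs.1, hs.2, ht.1, ht.2]

lemma vand_nonneg (θ : ℝ) (N : ℕ) (x : Fin N → ℝ) : 0 ≤ vand θ N x :=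
  Finset.prod_nonneg fun _ _ => Real.rpow_nonneg (abs_nonneg _) _

lemma vand_le_one {θ : ℝ} (hθ : 0 < θ) (N : ℕ) (x : Fin N → ℝ)
    (hx : ∀ i, x i ∈ Set.Icc (0:ℝ) 1) : vand θ N x ≤ 1 :=
  Finset.prod_le_one (fun _ _ => Real.rpow_nonneg (abs_nonneg _) _) fun _ _ =>
    Real.rpow_le_one (abs_nonneg _) (abs_sub_le_one (hx _) (hx _)) (by positivity)

lemma be_nonneg (a b : ℝ) {t : ℝ} (ht : t ∈ Set.Icc (0:ℝ) 1) :
    0 ≤ t ^ (a - 1) * (1 - t) ^ (b - 1) :=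
  mul_nonneg (Real.rpow_nonneg ht.1 _) (Real.rpow_nonneg (by linarith [ht.2]) _)

lemma wt_nonneg (θ a b : ℝ) (N : ℕ) (x : Fin N → ℝ) (hx : ∀ i, x i ∈ Set.Icc (0:ℝ) 1) :
    0 ≤ wt θ a b N x :=
  mul_nonneg (vand_nonneg _ _ _) (Finset.prod_nonneg fun i _ => be_nonneg a b (hx i))

lemma integrable_be {a b : ℝ} (ha : 0 < a) (hb : 0 < b) :
    Integrable (fun t : ℝ => t ^ (a - 1) * (1 - t) ^ (b - 1)) lam := by
  have h := (Complex.betaIntegral_convergent (u := a) (v := b) (by simpa) (by simpa)).norm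
  rw [intervalIntegrable_iff_integrableOn_Icc_of_le zero_le_one] at h
  refine Integrable.congr h ?_
  have h1 : ∀ᵐ t ∂lam, t ∈ Set.Ioo (0:ℝ) 1 := by
    unfold lam
    rw [← Measure.restrict_congr_set (Ioo_ae_eq_Icc (μ := volume) (a := (0:ℝ)) (b := 1))]
    exact ae_restrict_mem measurableSet_Ioo
  filter_upwards [h1] with t ht
  have e : (1 - (t:ℂ)) = ((1 - t : ℝ) : ℂ) := by push_cast; rfl
  rw [norm_mul, e, Complex.norm_cpow_eq_rpow_re_of_pos ht.1,
    Complex.norm_cpow_eq_rpow_re_of_pos (by linarith [ht.2])]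
  simp

lemma integrable_wt {θ a b : ℝ} (hθ : 0 < θ) (ha : 0 < a) (hb : 0 < b) (N : ℕ) :
    Integrable (wt θ a b N) (cube N) := by
  have h : Integrable (fun x : Fin N → ℝ => ∏ i, (x i ^ (a - 1) * (1 - x i) ^ (b - 1))) (cube N) :=
    Integrable.fintype_prod (f := fun _ t => t ^ (a - 1) * (1 - t) ^ (b - 1))
      fun _ => integrable_be ha hb
  refine h.mono (measurable_wt θ a b N).aestronglyMeasurable ?_
  filter_upwards [ae_cube N] with x hx
  unfold wt
  rw [norm_mul, Real.norm_of_nonneg (vand_nonneg _ _ _)]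
  exact mul_le_of_le_one_left (norm_nonneg _) (vand_le_one hθ N x hx)

end Jac

namespace Jac

lemma hasDerivAt_abs_rpow {s t : ℝ} (c : ℝ) (h : t ≠ s) :
    HasDerivAt (fun t => |t - s| ^ c) (|t - s| ^ c * (c / (t - s))) t := by
  have h0 : t - s ≠ 0 := sub_ne_zero.2 h
  have h1 : HasDerivAt (fun t => |t - s|) (SignType.sign (t - s) : ℝ) t := by
    simpa [Function.comp_def] using (hasDerivAt_abs h0).comp t ((hasDerivAt_id t).sub_const s)
  have h2 := h1.rpow_const (p := c) (Or.inl (abs_ne_zero.2 h0))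
  convert h2 using 1
  rw [Real.rpow_sub_one (abs_ne_zero.2 h0)]
  rcases lt_or_gt_of_ne h0 with h3 | h3
  · rw [abs_of_neg h3, sign_neg h3]; field_simp; simp
  · rw [abs_of_pos h3, sign_pos h3]; field_simp; simp

lemma hasDerivAt_prod_abs {ι : Type*} [DecidableEq ι] (s : Finset ι) (y : ι → ℝ) (c t : ℝ)
    (h : ∀ j ∈ s, t ≠ y j) :
    HasDerivAt (fun t => ∏ j ∈ s, |t - y j| ^ c)
      ((∏ j ∈ s, |t - y j| ^ c) * ∑ j ∈ s, c / (t - y j)) t := by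
  induction s using Finset.induction_on with
  | empty => simpa using hasDerivAt_const t (1:ℝ)
  | insert i s hi ih =>
    have h1 := ih fun j hj => h j (Finset.mem_insert_of_mem hj)
    have h2 := hasDerivAt_abs_rpow c (h i (Finset.mem_insert_self _ _))
    have h3 := h2.mul h1
    simp only [Finset.prod_insert hi, Finset.sum_insert hi]
    refine h3.congr_deriv ?_
    ring

lemma ibp_one {ι : Type*} [DecidableEq ι] (s : Finset ι) (y : ι → ℝ) {θ a b : ℝ} (hθ : 0 < θ)
    (ha : 0 < a) (hb : 0 < b) (k : ℕ) (F F' : ℝ → ℝ) (hF : ∀ t, HasDerivAt F (F' t) t)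
    (hItg : Integrable (fun t : ℝ => (∏ j ∈ s, |t - y j| ^ (2 * θ)) *
      (t ^ (a - 1) * (1 - t) ^ (b - 1)) *
      ((k + a) * t ^ k * (1 - t) * F t - b * t ^ (k+1) * F t + t ^ (k+1) * (1 - t) * F' t
        + t ^ (k+1) * (1 - t) * F t * ∑ j ∈ s, 2 * θ / (t - y j))) lam) :
    ∫ t, (∏ j ∈ s, |t - y j| ^ (2 * θ)) *
      (t ^ (a - 1) * (1 - t) ^ (b - 1)) *
      ((k + a) * t ^ k * (1 - t) * F t - b * t ^ (k+1) * F t + t ^ (k+1) * (1 - t) * F' t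
        + t ^ (k+1) * (1 - t) * F t * ∑ j ∈ s, 2 * θ / (t - y j)) ∂lam = 0 := by
  set G : ℝ → ℝ := fun t => (∏ j ∈ s, |t - y j| ^ (2 * θ)) *
      (t ^ (a - 1) * (1 - t) ^ (b - 1)) *
      ((k + a) * t ^ k * (1 - t) * F t - b * t ^ (k+1) * F t + t ^ (k+1) * (1 - t) * F' t
        + t ^ (k+1) * (1 - t) * F t * ∑ j ∈ s, 2 * θ / (t - y j)) with hG
  have hi : IntervalIntegrable G volume 0 1 := by
    rw [intervalIntegrable_iff_integrableOn_Icc_of_le zero_le_one]; exact hItg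
  have key := integral_eq_of_hasDerivAt_off_countable_of_le
    (fun t => (∏ j ∈ s, |t - y j| ^ (2 * θ)) * (t ^ a * (1 - t) ^ b) * (t ^ k * F t)) G
    zero_le_one (s := (s.image y : Finset ℝ)) (Finset.countable_toSet _) ?_ ?_ hi
  · have e : ∫ t, G t ∂lam = ∫ t in (0:ℝ)..1, G t := by
      rw [intervalIntegral.integral_of_le zero_le_one, ← integral_Icc_eq_integral_Ioc]; rfl
    rw [e, key]
    simp [Real.zero_rpow ha.ne', Real.zero_rpow hb.ne']
  · have hFc : Continuous F := continuous_iff_continuousAt.2 fun t => (hF t).continuousAt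
    refine Continuous.continuousOn ?_
    refine ((continuous_finsetProd _ fun j _ => ?_).mul (Continuous.mul ?_ ?_)).mul
      (by fun_prop)
    · exact ((continuous_id.sub continuous_const).abs).rpow_const fun _ => Or.inr (by positivity)
    · exact continuous_id.rpow_const fun _ => Or.inr ha.le
    · exact (continuous_const.sub continuous_id).rpow_const fun _ => Or.inr hb.le
  · rintro t ⟨ht, hts⟩
    have hts' : ∀ j ∈ s, t ≠ y j := by
      intro j hj e; apply hts; simp only [Finset.coe_image]; exact ⟨j, hj, e.symm⟩
    have h1 := hasDerivAt_prod_abs s y (2 * θ) t hts'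
    have ht0 : t ≠ 0 := ht.1.ne'
    have ht1 : 1 - t ≠ 0 := by linarith [ht.2]
    have h2 : HasDerivAt (fun t : ℝ => t ^ a) (a * t ^ (a - 1)) t :=
      Real.hasDerivAt_rpow_const (Or.inl ht0)
    have h3 : HasDerivAt (fun t : ℝ => (1 - t) ^ b) (-1 * b * (1 - t) ^ (b - 1)) t :=
      ((hasDerivAt_id t).const_sub 1).rpow_const (Or.inl ht1)
    have h4 := (hasDerivAt_pow k t).mul (hF t)
    have h5 := (h1.mul (h2.mul h3)).mul h4
    refine h5.congr_deriv ?_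
    simp only [hG, Pi.mul_apply]
    have e1 : t ^ a = t * t ^ (a - 1) := by rw [Real.rpow_sub_one ht0]; field_simp
    have e2 : (1 - t) ^ b = (1 - t) * (1 - t) ^ (b - 1) := by
      rw [Real.rpow_sub_one ht1]; field_simp
    have e3 : t * (k * t ^ (k - 1)) = k * t ^ k := by
      cases k with
      | zero => simp
      | succ k => simp [pow_succ]; ring
    rw [e1, e2]
    linear_combination (∏ j ∈ s, |t - y j| ^ (2 * θ)) * t ^ (a-1) * (1 - t) ^ (b-1) * (1 - t)
      * F t * e3

end Jac

namespace Jac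

/-- Truncated power singularity. -/
noncomputable def gsing (θ : ℝ) (u : ℝ) : ℝ :=
  Set.indicator (Set.Icc (-1:ℝ) 1) (fun u => |u| ^ (2 * θ - 1)) u

lemma measurable_gsing (θ : ℝ) : Measurable (gsing θ) := by
  unfold gsing
  refine Measurable.indicator ?_ measurableSet_Icc
  fun_prop

lemma gsing_nonneg (θ u : ℝ) : 0 ≤ gsing θ u :=
  Set.indicator_nonneg (fun _ _ => Real.rpow_nonneg (abs_nonneg _) _) _

lemma integrable_gsing {θ : ℝ} (hθ : 0 < θ) : Integrable (gsing θ) := by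
  unfold gsing
  rw [integrable_indicator_iff measurableSet_Icc,
    ← intervalIntegrable_iff_integrableOn_Icc_of_le (by norm_num)]
  have h1 : IntervalIntegrable (fun u : ℝ => |u| ^ (2 * θ - 1)) volume 0 1 := by
    refine (intervalIntegral.intervalIntegrable_rpow' (r := 2 * θ - 1) (by linarith)).congr ?_
    intro u hu
    rw [Set.uIoc_of_le zero_le_one] at hu
    simp only [abs_of_pos hu.1]
  have h2 : IntervalIntegrable (fun u : ℝ => |u| ^ (2 * θ - 1)) volume (-1) 0 := by
    rw [IntervalIntegrable.iff_comp_neg]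
    simpa using h1.symm
  exact h2.trans h1

lemma integrable_dom {θ a b : ℝ} (hθ : 0 < θ) (ha : 0 < a) (hb : 0 < b) {n : ℕ} (j : Fin n) :
    Integrable (fun p : ℝ × (Fin n → ℝ) => gsing θ (p.1 - p.2 j) *
      ∏ l, (p.2 l ^ (a - 1) * (1 - p.2 l) ^ (b - 1))) (lam.prod (cube n)) := by
  have hB : Integrable (fun x : Fin n → ℝ => ∏ i, (x i ^ (a - 1) * (1 - x i) ^ (b - 1))) (cube n) :=
    Integrable.fintype_prod (f := fun _ t => t ^ (a - 1) * (1 - t) ^ (b - 1))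
      fun _ => integrable_be ha hb
  have h : Integrable (fun p : ℝ × (Fin n → ℝ) => gsing θ (p.1 - p.2 j) *
      ∏ l, (p.2 l ^ (a - 1) * (1 - p.2 l) ^ (b - 1))) ((volume : Measure ℝ).prod (cube n)) := by
    rw [integrable_prod_iff']
    · constructor
      · refine Filter.Eventually.of_forall fun y => ?_
        exact ((integrable_gsing hθ).comp_sub_right (y j)).mul_const
          (∏ l, (y l ^ (a - 1) * (1 - y l) ^ (b - 1)))
      · simp only [norm_mul, integral_mul_const, Real.norm_of_nonneg (gsing_nonneg _ _)]
        have : ∀ y : Fin n → ℝ, ∫ t, gsing θ (t - y j) = ∫ t, gsing θ t := fun y =>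
          integral_sub_right_eq_self (gsing θ) (y j)
        simp only [this]
        exact hB.norm.const_mul _
    · apply Measurable.aestronglyMeasurable
      refine Measurable.mul ((measurable_gsing θ).comp (by fun_prop)) ?_
      refine Finset.measurable_prod _ fun p _ => ?_
      fun_prop
  refine h.mono_measure ?_
  unfold lam
  have e : ((volume : Measure ℝ).restrict (Set.Icc 0 1)).prod (cube n)
      = ((volume : Measure ℝ).prod (cube n)).restrict (Set.Icc 0 1 ×ˢ Set.univ) := by
    rw [← Measure.prod_restrict, Measure.restrict_univ]
  rw [e]
  exact Measure.restrict_le_self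

lemma be_mul_le {a b t : ℝ} (ha : 0 < a) (hb : 0 < b) (ht : t ∈ Set.Icc (0:ℝ) 1) :
    t ^ (a - 1) * (1 - t) ^ (b - 1) * (t * (1 - t)) ≤ 1 := by
  have aux : ∀ c s : ℝ, 0 < c → s ∈ Set.Icc (0:ℝ) 1 → s ^ (c - 1) * s ≤ 1 := by
    intro c s hc hs
    rcases hs.1.eq_or_lt with h | h
    · rw [← h]; simp
    · rw [Real.rpow_sub_one h.ne', div_mul_cancel₀ _ h.ne']
      exact Real.rpow_le_one hs.1 hs.2 hc.le
  have h1 := aux a t ha ht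
  have hs : 1 - t ∈ Set.Icc (0:ℝ) 1 := ⟨by linarith [ht.2], by linarith [ht.1]⟩
  have h2 := aux b (1 - t) hb hs
  calc _ = (t ^ (a - 1) * t) * ((1 - t) ^ (b - 1) * (1 - t)) := by ring
    _ ≤ 1 := mul_le_one₀ h1 (mul_nonneg (Real.rpow_nonneg hs.1 _) hs.1) h2

lemma vand_split {θ : ℝ} {N : ℕ} (x : Fin N → ℝ) (i : Fin N) :
    vand θ N x = (∏ j ∈ Finset.univ.erase i, |x i - x j| ^ (2 * θ)) *
        ∏ p ∈ Finset.univ.filter (fun p : Fin N × Fin N => p.1 < p.2 ∧ p.1 ≠ i ∧ p.2 ≠ i),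
          |x p.1 - x p.2| ^ (2 * θ) :=
  pair_split (fun i j => |x i - x j| ^ (2 * θ)) (fun i j => by rw [abs_sub_comm]) i

lemma vand_le {θ : ℝ} (hθ : 0 < θ) {N : ℕ} (x : Fin N → ℝ) (hx : ∀ i, x i ∈ Set.Icc (0:ℝ) 1)
    {i j : Fin N} (hij : j ≠ i) : vand θ N x ≤ |x i - x j| ^ (2 * θ) := by
  have h0 : ∀ i j, 0 ≤ |x i - x j| ^ (2 * θ) := fun i j => Real.rpow_nonneg (abs_nonneg _) _
  have h1 : ∀ i j, |x i - x j| ^ (2 * θ) ≤ 1 := fun i j =>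
    Real.rpow_le_one (abs_nonneg _) (abs_sub_le_one (hx _) (hx _)) (by positivity)
  rw [vand_split x i, ← Finset.mul_prod_erase _ _ (Finset.mem_erase.2 ⟨hij, Finset.mem_univ j⟩),
    mul_assoc]
  refine mul_le_of_le_one_right (h0 _ _) (mul_le_one₀ ?_ ?_ ?_)
  · exact Finset.prod_le_one (fun _ _ => h0 _ _) fun _ _ => h1 _ _
  · exact Finset.prod_nonneg fun _ _ => h0 _ _
  · exact Finset.prod_le_one (fun _ _ => h0 _ _) fun _ _ => h1 _ _

lemma integrable_sing0 {θ a b : ℝ} (hθ : 0 < θ) (ha : 0 < a) (hb : 0 < b) {n : ℕ}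
    {i j : Fin (n+1)} (hij : j ≠ i) :
    Integrable (fun x => wt θ a b (n+1) x * (x i * (1 - x i) * (1 / (x i - x j))))
      (cube (n+1)) := by
  obtain ⟨j', rfl⟩ := Fin.exists_succAbove_eq hij
  have hmp := measurePreserving_piFinSuccAbove (fun _ : Fin (n+1) => lam) i
  have hD := (hmp.integrable_comp_emb (MeasurableEquiv.measurableEmbedding _)).2
    (integrable_dom (θ := θ) (a := a) (b := b) hθ ha hb j')
  refine Integrable.mono hD ?_ ?_
  · apply Measurable.aestronglyMeasurable
    refine (measurable_wt _ _ _ _).mul ?_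
    fun_prop
  filter_upwards [ae_cube (n+1)] with x hx
  simp only [Function.comp_apply, MeasurableEquiv.piFinSuccAbove_apply, Fin.insertNthEquiv,
    Equiv.coe_fn_symm_mk, Fin.removeNth]
  set s := x i - x (i.succAbove j') with hs
  have hsabs : |s| ≤ 1 := abs_sub_le_one (hx _) (hx _)
  have hg : gsing θ s = |s| ^ (2 * θ - 1) := by
    unfold gsing; rw [Set.indicator_of_mem]; exact abs_le.1 hsabs
  have hprod : 0 ≤ ∏ l, (x (i.succAbove l) ^ (a - 1) * (1 - x (i.succAbove l)) ^ (b - 1)) :=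
    Finset.prod_nonneg fun l _ => be_nonneg a b (hx _)
  rw [hg, Real.norm_of_nonneg (mul_nonneg (Real.rpow_nonneg (abs_nonneg _) _) hprod)]
  rw [norm_mul, Real.norm_of_nonneg (wt_nonneg _ _ _ _ _ hx), norm_mul,
    Real.norm_of_nonneg (mul_nonneg (hx i).1 (by linarith [(hx i).2]) : 0 ≤ x i * (1 - x i)),
    norm_div, norm_one, Real.norm_eq_abs]
  unfold wt
  rw [Fin.prod_univ_succAbove _ i]
  rcases eq_or_ne s 0 with h0 | h0
  · rw [h0]; simp only [abs_zero, div_zero, mul_zero]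
    exact mul_nonneg (Real.rpow_nonneg le_rfl _) hprod
  have hv : vand θ (n+1) x * (1 / |s|) ≤ |s| ^ (2 * θ - 1) := by
    rw [Real.rpow_sub_one (abs_ne_zero.2 h0), mul_one_div]
    gcongr
    exact vand_le hθ x hx hij
  calc _ = (vand θ (n+1) x * (1 / |s|)) *
        ((x i) ^ (a - 1) * (1 - x i) ^ (b - 1) * (x i * (1 - x i))) *
        ∏ l, (x (i.succAbove l) ^ (a - 1) * (1 - x (i.succAbove l)) ^ (b - 1)) := by ring
    _ ≤ |s| ^ (2 * θ - 1) * 1 *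
        ∏ l, (x (i.succAbove l) ^ (a - 1) * (1 - x (i.succAbove l)) ^ (b - 1)) := by
      gcongr
      · exact mul_nonneg (be_nonneg a b (hx i)) (mul_nonneg (hx i).1 (by linarith [(hx i).2]))
      · exact be_mul_le ha hb (hx i)
    _ = _ := by ring

lemma bdd_cube {N : ℕ} {f : (Fin N → ℝ) → ℝ} (hf : Continuous f) :
    ∃ C, ∀ᵐ x ∂cube N, ‖f x‖ ≤ C := by
  have hc : IsCompact (Set.univ.pi fun _ : Fin N => Set.Icc (0 : ℝ) 1) :=
    isCompact_univ_pi fun _ => isCompact_Icc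
  obtain ⟨C, hC⟩ := hc.exists_bound_of_continuousOn hf.continuousOn
  refine ⟨C, ?_⟩
  filter_upwards [ae_cube N] with x hx
  exact hC x fun i _ => hx i

lemma integrable_wt_mul {θ a b : ℝ} (hθ : 0 < θ) (ha : 0 < a) (hb : 0 < b) {N : ℕ}
    {f : (Fin N → ℝ) → ℝ} (hf : Continuous f) :
    Integrable (fun x => wt θ a b N x * f x) (cube N) := by
  obtain ⟨C, hC⟩ := bdd_cube hf
  exact (integrable_wt hθ ha hb N).mul_bdd (c := C) hf.aestronglyMeasurable hC

/-- The integrand in the `i`th integration by parts. -/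
noncomputable def Qi (θ a b : ℝ) (k : ℕ) {N : ℕ} (F : (Fin N → ℝ) → ℝ)
    (F' : Fin N → (Fin N → ℝ) → ℝ) (i : Fin N) (x : Fin N → ℝ) : ℝ :=
  (k + a) * x i ^ k * (1 - x i) * F x - b * x i ^ (k+1) * F x + x i ^ (k+1) * (1 - x i) * F' i x
        + x i ^ (k+1) * (1 - x i) * F x * ∑ j ∈ Finset.univ.erase i, 2 * θ / (x i - x j)

lemma integrable_Qi {θ a b : ℝ} (hθ : 0 < θ) (ha : 0 < a) (hb : 0 < b) (k : ℕ) {n : ℕ}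
    (F : (Fin (n+1) → ℝ) → ℝ) (F' : Fin (n+1) → (Fin (n+1) → ℝ) → ℝ) (hF : Continuous F)
    (hF' : ∀ i, Continuous (F' i)) (i : Fin (n+1)) :
    Integrable (fun x => wt θ a b (n+1) x * Qi θ a b k F F' i x) (cube (n+1)) := by
  unfold Qi
  have hF'i := hF' i
  have h1 : Integrable (fun x => wt θ a b (n+1) x *
      ((k + a) * x i ^ k * (1 - x i) * F x - b * x i ^ (k+1) * F x
        + x i ^ (k+1) * (1 - x i) * F' i x)) (cube (n+1)) :=
    integrable_wt_mul hθ ha hb (by fun_prop)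
  have h2 : ∀ j ∈ Finset.univ.erase i, Integrable (fun x => (wt θ a b (n+1) x *
      (x i * (1 - x i) * (1 / (x i - x j)))) * (2 * θ * x i ^ k * F x)) (cube (n+1)) := by
    intro j hj
    have hc : Continuous fun x : Fin (n+1) → ℝ => 2 * θ * x i ^ k * F x := by fun_prop
    obtain ⟨C, hC⟩ := bdd_cube hc
    exact (integrable_sing0 hθ ha hb (Finset.ne_of_mem_erase hj)).mul_bdd (c := C)
      hc.aestronglyMeasurable hC
  have h3 := h1.add (integrable_finsetSum _ h2)
  refine h3.congr (Filter.Eventually.of_forall fun x => ?_)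
  simp only [Pi.add_apply]
  conv_rhs => rw [mul_add]
  congr 1
  conv_rhs => rw [Finset.mul_sum, Finset.mul_sum]
  refine Finset.sum_congr rfl fun j _ => ?_
  ring

lemma ibp_i {θ a b : ℝ} (hθ : 0 < θ) (ha : 0 < a) (hb : 0 < b) (k : ℕ) {n : ℕ}
    (F : (Fin (n+1) → ℝ) → ℝ) (F' : Fin (n+1) → (Fin (n+1) → ℝ) → ℝ) (hF : Continuous F)
    (hF' : ∀ i, Continuous (F' i))
    (hd : ∀ (i : Fin (n+1)) (y : Fin n → ℝ) (t : ℝ),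
      HasDerivAt (fun t => F (i.insertNth t y)) (F' i (i.insertNth t y)) t) (i : Fin (n+1)) :
    ∫ x, wt θ a b (n+1) x * Qi θ a b k F F' i x ∂cube (n+1) = 0 := by
  have hItg := integrable_Qi hθ ha hb k F F' hF hF' i
  have hmp := (measurePreserving_piFinSuccAbove (fun _ : Fin (n+1) => lam) i).symm
  have hItg2 := (hmp.integrable_comp_emb (MeasurableEquiv.measurableEmbedding _)).2 hItg
  have e := hmp.integral_comp (MeasurableEquiv.measurableEmbedding _)
    (fun x => wt θ a b (n+1) x * Qi θ a b k F F' i x)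
  have e' : ∫ x, wt θ a b (n+1) x * Qi θ a b k F F' i x ∂cube (n+1)
    = ∫ p, ((fun x => wt θ a b (n+1) x * Qi θ a b k F F' i x) ∘
      (MeasurableEquiv.piFinSuccAbove (fun _ => ℝ) i).symm) p ∂(lam.prod (cube n)) := e.symm
  change Integrable _ (lam.prod (cube n)) at hItg2
  rw [e', integral_prod_symm _ hItg2]
  refine integral_eq_zero_of_ae ?_
  filter_upwards [hItg2.prod_left_ae] with y hy
  simp only [Pi.zero_apply]
  simp only [Function.comp_apply, MeasurableEquiv.piFinSuccAbove_symm_apply, Fin.insertNthEquiv,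
    Equiv.coe_fn_mk] at hy ⊢
  set x0 : Fin (n+1) → ℝ := i.insertNth (α := fun _ => ℝ) 0 y with hx0
  set C : ℝ := (∏ p ∈ Finset.univ.filter
      (fun p : Fin (n+1) × Fin (n+1) => p.1 < p.2 ∧ p.1 ≠ i ∧ p.2 ≠ i),
          |x0 p.1 - x0 p.2| ^ (2 * θ)) * ∏ l, (y l ^ (a - 1) * (1 - y l) ^ (b - 1)) with hC
  have hz : ∀ (t : ℝ) (j : Fin (n+1)), j ≠ i →
      i.insertNth (α := fun _ => ℝ) t y j = x0 j := by
    intro t j hj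
    obtain ⟨j', rfl⟩ := Fin.exists_succAbove_eq hj
    simp [hx0]
  have hG : ∀ t : ℝ, wt θ a b (n+1) (i.insertNth (α := fun _ => ℝ) t y) *
      Qi θ a b k F F' i (i.insertNth (α := fun _ => ℝ) t y) =
      C * ((∏ j ∈ Finset.univ.erase i, |t - x0 j| ^ (2 * θ)) *
      (t ^ (a - 1) * (1 - t) ^ (b - 1)) *
      ((k + a) * t ^ k * (1 - t) * F (i.insertNth (α := fun _ => ℝ) t y)
        - b * t ^ (k+1) * F (i.insertNth (α := fun _ => ℝ) t y)
        + t ^ (k+1) * (1 - t) * F' i (i.insertNth (α := fun _ => ℝ) t y)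
        + t ^ (k+1) * (1 - t) * F (i.insertNth (α := fun _ => ℝ) t y) *
          ∑ j ∈ Finset.univ.erase i, 2 * θ / (t - x0 j))) := by
    intro t
    unfold wt Qi
    rw [vand_split _ i, Fin.prod_univ_succAbove _ i]
    simp only [Fin.insertNth_apply_same, Fin.insertNth_apply_succAbove]
    have e1 : ∏ j ∈ Finset.univ.erase i, |t - i.insertNth (α := fun _ => ℝ) t y j| ^ (2 * θ)
        = ∏ j ∈ Finset.univ.erase i, |t - x0 j| ^ (2 * θ) :=
      Finset.prod_congr rfl fun j hj => by rw [hz t j (Finset.ne_of_mem_erase hj)]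
    have e2 : ∑ j ∈ Finset.univ.erase i, 2 * θ / (t - i.insertNth (α := fun _ => ℝ) t y j)
        = ∑ j ∈ Finset.univ.erase i, 2 * θ / (t - x0 j) :=
      Finset.sum_congr rfl fun j hj => by rw [hz t j (Finset.ne_of_mem_erase hj)]
    have e3 : ∏ p ∈ Finset.univ.filter
        (fun p : Fin (n+1) × Fin (n+1) => p.1 < p.2 ∧ p.1 ≠ i ∧ p.2 ≠ i),
          |i.insertNth (α := fun _ => ℝ) t y p.1 - i.insertNth (α := fun _ => ℝ) t y p.2| ^ (2 * θ)
        = ∏ p ∈ Finset.univ.filter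
        (fun p : Fin (n+1) × Fin (n+1) => p.1 < p.2 ∧ p.1 ≠ i ∧ p.2 ≠ i),
          |x0 p.1 - x0 p.2| ^ (2 * θ) :=
      Finset.prod_congr rfl fun p hp => by
        have := (Finset.mem_filter.1 hp).2
        rw [hz t _ this.2.1, hz t _ this.2.2]
    rw [e1, e2, e3, hC]
    ring
  simp only [hG] at hy ⊢
  rw [integral_const_mul]
  rcases eq_or_ne C 0 with h0 | h0
  · rw [h0, zero_mul]
  rw [ibp_one (Finset.univ.erase i) x0 hθ ha hb k _ _ (hd i y), mul_zero]
  exact (integrable_const_mul_iff (IsUnit.mk0 C h0) _).1 hy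

end Jac

namespace Jac

/-- Power sums. -/
noncomputable def pw (N k : ℕ) (x : Fin N → ℝ) : ℝ := ∑ i, x i ^ k

lemma continuous_pw (N k : ℕ) : Continuous (pw N k) := by
  unfold pw; fun_prop

/-- Divided difference of `t^(k+1) - t^(k+2)`. -/
noncomputable def dd (k : ℕ) (s t : ℝ) : ℝ :=
  ∑ l ∈ Finset.range (k+1), s ^ l * t ^ (k - l) -
    ∑ l ∈ Finset.range (k+2), s ^ l * t ^ (k + 1 - l)

lemma dd_mul (k : ℕ) (s t : ℝ) :
    dd k s t * (s - t) = (s ^ (k+1) - s ^ (k+2)) - (t ^ (k+1) - t ^ (k+2)) := by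
  have h1 := geom_sum₂_mul s t (k+1)
  have h2 := geom_sum₂_mul s t (k+2)
  have e1 : k + 1 - 1 = k := rfl
  have e2 : k + 2 - 1 = k + 1 := rfl
  rw [e1] at h1; rw [e2] at h2
  unfold dd
  linear_combination h1 - h2

lemma dd_self (k : ℕ) (s : ℝ) : dd k s s = (k+1) * s ^ k - (k+2) * s ^ (k+1) := by
  unfold dd
  have e1 : ∀ l ∈ Finset.range (k+1), s ^ l * s ^ (k - l) = s ^ k := by
    intro l hl; rw [← pow_add]; congr 1; have := Finset.mem_range.1 hl; omega
  have e2 : ∀ l ∈ Finset.range (k+2), s ^ l * s ^ (k + 1 - l) = s ^ (k+1) := by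
    intro l hl; rw [← pow_add]; congr 1; have := Finset.mem_range.1 hl; omega
  rw [Finset.sum_congr rfl e1, Finset.sum_congr rfl e2]
  simp

lemma sum_pow_mul {N : ℕ} (x : Fin N → ℝ) (u v : ℕ) :
    ∑ i, ∑ j, x i ^ u * x j ^ v = pw N u x * pw N v x := by
  unfold pw; rw [Finset.sum_mul_sum]

lemma sum_dd {N : ℕ} (k : ℕ) (x : Fin N → ℝ) :
    ∑ i, ∑ j, dd k (x i) (x j) = ∑ l ∈ Finset.range (k+1), pw N l x * pw N (k - l) x -
      ∑ l ∈ Finset.range (k+2), pw N l x * pw N (k + 1 - l) x := by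
  unfold dd
  simp only [Finset.sum_sub_distrib, ← sum_pow_mul]
  congr 1 <;>
  · conv_rhs => rw [Finset.sum_comm]
    refine Finset.sum_congr rfl fun i _ => ?_
    exact Finset.sum_comm

lemma sym_sum {N : ℕ} (k : ℕ) (x : Fin N → ℝ) (hx : Function.Injective x) :
    2 * ∑ i, (x i ^ (k+1) - x i ^ (k+2)) * ∑ j ∈ Finset.univ.erase i, 1 / (x i - x j)
      = ∑ i, ∑ j, dd k (x i) (x j) - ∑ i, dd k (x i) (x i) := by
  have h1 : ∀ i, ∑ j ∈ Finset.univ.erase i, 1 / (x i - x j) = ∑ j, 1 / (x i - x j) := by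
    intro i
    rw [← Finset.add_sum_erase Finset.univ (fun j => 1 / (x i - x j)) (Finset.mem_univ i)]
    simp
  simp only [h1, Finset.mul_sum]
  set h : Fin N → ℝ := fun i => x i ^ (k+1) - x i ^ (k+2) with hh
  have h2 : ∑ i, ∑ j, h i * (1 / (x i - x j)) = ∑ i, ∑ j, h j * (1 / (x j - x i)) :=
    Finset.sum_comm
  have h3 : ∑ i, ∑ j, h i * (1 / (x i - x j)) + ∑ i, ∑ j, h j * (1 / (x j - x i))
      = ∑ i, ∑ j, dd k (x i) (x j) - ∑ i, dd k (x i) (x i) := by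
    rw [← Finset.sum_add_distrib, ← Finset.sum_sub_distrib]
    refine Finset.sum_congr rfl fun i _ => ?_
    rw [← Finset.sum_add_distrib, eq_sub_iff_add_eq,
      ← Finset.add_sum_erase _ _ (Finset.mem_univ i),
      ← Finset.add_sum_erase _ (fun j => dd k (x i) (x j)) (Finset.mem_univ i)]
    simp only [sub_self, div_zero, mul_zero, zero_add]
    rw [add_comm]
    congr 1
    refine Finset.sum_congr rfl fun j hj => ?_
    have hne : x i - x j ≠ 0 :=
      sub_ne_zero.2 fun e => (Finset.ne_of_mem_erase hj) (hx e).symm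
    have hne' : x j - x i ≠ 0 := by rw [← neg_sub]; exact neg_ne_zero.2 hne
    have e := dd_mul k (x i) (x j)
    have e2 : 1 / (x j - x i) = -(1 / (x i - x j)) := by
      rw [← neg_sub (x i), one_div_neg_eq_neg_one_div]
    rw [e2, ← mul_left_inj' hne, e, hh]
    field_simp
    ring
  have h4 : ∑ i, ∑ j, 2 * (h i * (1 / (x i - x j))) = 2 * ∑ i, ∑ j, h i * (1 / (x i - x j)) := by
    simp only [Finset.mul_sum]
  rw [h4]
  linarith

lemma vand_eq_zero {θ : ℝ} (hθ : 0 < θ) {N : ℕ} (x : Fin N → ℝ) (hx : ¬ Function.Injective x) :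
    vand θ N x = 0 := by
  unfold Function.Injective at hx
  push Not at hx
  obtain ⟨i, j, h, hij⟩ := hx
  rw [vand_split x i]
  rw [Finset.prod_eq_zero (Finset.mem_erase.2 ⟨Ne.symm hij, Finset.mem_univ j⟩), zero_mul]
  rw [h, sub_self, abs_zero, Real.zero_rpow (by positivity)]

/-- The bracket of the loop equation. -/
noncomputable def LL (θ a b : ℝ) (k N : ℕ) (x : Fin N → ℝ) : ℝ :=
  (k + a) * (pw N k x - pw N (k+1) x) - b * pw N (k+1) x +
   θ * (∑ l ∈ Finset.range (k+1), pw N l x * pw N (k - l) x -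
      ∑ l ∈ Finset.range (k+2), pw N l x * pw N (k + 1 - l) x
      - (k+1) * pw N k x + (k+2) * pw N (k+1) x)

lemma sum_Qi {θ a b : ℝ} (hθ : 0 < θ) (k : ℕ) {N : ℕ}
    (F : (Fin N → ℝ) → ℝ) (F' : Fin N → (Fin N → ℝ) → ℝ) (x : Fin N → ℝ) :
    ∑ i, wt θ a b N x * Qi θ a b k F F' i x = wt θ a b N x *
      (F x * LL θ a b k N x + ∑ i, (x i ^ (k+1) - x i ^ (k+2)) * F' i x) := by
  by_cases hx : Function.Injective x
  · rw [← Finset.mul_sum]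
    congr 1
    have h1 := sym_sum k x hx
    rw [sum_dd] at h1
    simp only [dd_self, Finset.sum_sub_distrib, ← Finset.mul_sum] at h1
    have hq : ∀ i, Qi θ a b k F F' i x = F x * ((k + a) * (x i ^ k - x i ^ (k+1))
        - b * x i ^ (k+1) + θ * (2 * ((x i ^ (k+1) - x i ^ (k+2)) *
          ∑ j ∈ Finset.univ.erase i, 1 / (x i - x j)))) +
          (x i ^ (k+1) - x i ^ (k+2)) * F' i x := by
      intro i
      unfold Qi
      have : ∑ j ∈ Finset.univ.erase i, 2 * θ / (x i - x j)
        = 2 * θ * ∑ j ∈ Finset.univ.erase i, 1 / (x i - x j) := by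
        rw [Finset.mul_sum]; exact Finset.sum_congr rfl fun j _ => by ring
      rw [this]; ring
    rw [Finset.sum_congr rfl fun i _ => hq i, Finset.sum_add_distrib, ← Finset.mul_sum,
      Finset.sum_add_distrib, Finset.sum_sub_distrib, ← Finset.mul_sum, ← Finset.mul_sum,
      ← Finset.mul_sum, ← Finset.mul_sum, h1, Finset.sum_sub_distrib]
    unfold LL
    simp only [pw]
    ring
  · simp [wt, vand_eq_zero hθ x hx]

lemma loop_raw {θ a b : ℝ} (hθ : 0 < θ) (ha : 0 < a) (hb : 0 < b) (k n : ℕ) (m : ℝ) :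
    ∫ x, wt θ a b (n+1) x * ((pw (n+1) (k+1) x / (n+1) - m) * LL θ a b k (n+1) x +
      (k+1) / (n+1) * (pw (n+1) (2*k+1) x - pw (n+1) (2*k+2) x)) ∂cube (n+1) = 0 := by
  set F : (Fin (n+1) → ℝ) → ℝ := fun x => pw (n+1) (k+1) x / (n+1) - m with hF
  set F' : Fin (n+1) → (Fin (n+1) → ℝ) → ℝ := fun i x => (k+1) * x i ^ k / (n+1) with hF'
  have hFc : Continuous F := by
    have := continuous_pw (n+1) (k+1)
    fun_prop
  have hF'c : ∀ i, Continuous (F' i) := fun i => by fun_prop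
  have hd : ∀ (i : Fin (n+1)) (y : Fin n → ℝ) (t : ℝ),
      HasDerivAt (fun t => F (i.insertNth t y)) (F' i (i.insertNth t y)) t := by
    intro i y t
    have e : (fun t => F (i.insertNth t y)) =
        fun t => (t ^ (k+1) + ∑ l, y l ^ (k+1)) / (n+1) - m := by
      funext t
      simp only [hF, pw]
      rw [Fin.sum_univ_succAbove _ i]
      simp
    rw [e]
    have := (((hasDerivAt_pow (k+1) t).add_const (∑ l, y l ^ (k+1))).div_const
      ((n:ℝ)+1)).sub_const m
    simpa [hF'] using this
  have h0 := fun i => ibp_i hθ ha hb k F F' hFc hF'c hd i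
  have h1 : ∫ x, ∑ i, wt θ a b (n+1) x * Qi θ a b k F F' i x ∂cube (n+1) = 0 := by
    rw [integral_finsetSum _ fun i _ => integrable_Qi hθ ha hb k F F' hFc hF'c i]
    exact Finset.sum_eq_zero fun i _ => h0 i
  simp only [sum_Qi hθ] at h1
  rw [← h1]
  congr 1; funext x
  congr 2
  simp only [hF', pw]
  rw [← Finset.sum_sub_distrib, Finset.mul_sum]
  exact Finset.sum_congr rfl fun i _ => by ring

end Jac

namespace Jac

lemma raw_eq (θ α : ℝ) (M N : ℕ) : jacobiMeasureRaw θ α M N =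
    (cube N).withDensity (fun x => ENNReal.ofReal
      (wt θ (θ * α) (θ * ((M:ℝ) - (N:ℝ)) + θ) N x)) := by
  unfold jacobiMeasureRaw
  rw [cube_eq]; rfl

lemma wt_pos (θ a b : ℝ) (N : ℕ) (x : Fin N → ℝ) (hx : ∀ i, x i ∈ Set.Ioo (0:ℝ) 1)
    (hx' : ∀ i j, i ≠ j → x i ≠ x j) : 0 < wt θ a b N x := by
  unfold wt vand
  refine mul_pos (Finset.prod_pos fun p hp => ?_) (Finset.prod_pos fun i _ => ?_)
  · have := (Finset.mem_filter.1 hp).2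
    exact Real.rpow_pos_of_pos (abs_pos.2 (sub_ne_zero.2 (hx' _ _ this.ne))) _
  · exact mul_pos (Real.rpow_pos_of_pos (hx i).1 _)
      (Real.rpow_pos_of_pos (by linarith [(hx i).2]) _)

lemma mass_ne_zero (θ a b : ℝ) (N : ℕ) :
    ∫⁻ x, ENNReal.ofReal (wt θ a b N x) ∂cube N ≠ 0 := by
  intro h
  rw [lintegral_eq_zero_iff (measurable_wt θ a b N).ennreal_ofReal] at h
  rw [← cube_eq, Filter.EventuallyEq,
    ae_restrict_iff' (MeasurableSet.univ_pi fun _ => measurableSet_Icc)] at h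
  set U : Set (Fin N → ℝ) := {x | (∀ i, x i ∈ Set.Ioo (0:ℝ) 1) ∧ ∀ i j, i ≠ j → x i ≠ x j} with hU
  have hUo : IsOpen U := by
    have e : U = (⋂ i, {x | x i ∈ Set.Ioo (0:ℝ) 1}) ∩
        ⋂ i, ⋂ j, ⋂ (_ : i ≠ j), {x : Fin N → ℝ | x i ≠ x j} := by
      ext x; simp [hU]
    rw [e]
    refine (isOpen_iInter_of_finite fun i => isOpen_Ioo.preimage (continuous_apply i)).inter ?_
    refine isOpen_iInter_of_finite fun i => isOpen_iInter_of_finite fun j =>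
      isOpen_iInter_of_finite fun _ => ?_
    exact isOpen_ne_fun (continuous_apply i) (continuous_apply j)
  have hUn : U.Nonempty := by
    refine ⟨fun i => ((i:ℕ) + 1 : ℝ) / (N + 1), ?_, ?_⟩
    · intro i
      have : ((i:ℕ):ℝ) + 1 < N + 1 := by exact_mod_cast Nat.succ_lt_succ i.2
      constructor
      · positivity
      · rw [div_lt_one (by positivity)]; exact this
    · intro i j hij e
      apply hij
      have hN : (N:ℝ) + 1 ≠ 0 := by positivity
      rw [div_left_inj' hN] at e
      have : ((i:ℕ):ℝ) = (j:ℕ) := by linarith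
      exact Fin.ext (by exact_mod_cast this)
  have hpos := hUo.measure_pos volume hUn
  have hz : volume U = 0 := by
    refine measure_mono_null ?_ h
    intro x hx hc
    have := hc (fun i _ => ⟨(hx.1 i).1.le, (hx.1 i).2.le⟩)
    have h2 := wt_pos θ a b N x hx.1 hx.2
    simp only [Pi.zero_apply, ENNReal.ofReal_eq_zero] at this
    linarith
  exact hpos.ne' hz

lemma mass_ne_top {θ a b : ℝ} (hθ : 0 < θ) (ha : 0 < a) (hb : 0 < b) (N : ℕ) :
    ∫⁻ x, ENNReal.ofReal (wt θ a b N x) ∂cube N ≠ ⊤ :=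
  (integrable_wt hθ ha hb N).lintegral_lt_top.ne

lemma b_pos {θ : ℝ} (hθ : 0 < θ) {M N : ℕ} (hM : N ≤ M) : 0 < θ * ((M:ℝ) - (N:ℝ)) + θ := by
  have : (N:ℝ) ≤ M := by exact_mod_cast hM
  have := mul_nonneg hθ.le (sub_nonneg.2 this)
  linarith

lemma isProb {θ α : ℝ} {M N : ℕ} (hθ : 0 < θ) (hα : 0 < α) (hM : N ≤ M) :
    IsProbabilityMeasure (jacobiEnsemble θ α M N) := by
  constructor
  unfold jacobiEnsemble
  rw [Measure.smul_apply, smul_eq_mul]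
  have e : jacobiMeasureRaw θ α M N Set.univ = ∫⁻ x, ENNReal.ofReal
      (wt θ (θ * α) (θ * ((M:ℝ) - (N:ℝ)) + θ) N x) ∂cube N := by
    rw [raw_eq, withDensity_apply _ MeasurableSet.univ, Measure.restrict_univ]
  refine ENNReal.inv_mul_cancel ?_ ?_
  · rw [e]; exact mass_ne_zero _ _ _ _
  · rw [e]; exact mass_ne_top hθ (mul_pos hθ hα) (b_pos hθ hM) _

lemma ae_ens (θ α : ℝ) (M N : ℕ) :
    ∀ᵐ x ∂jacobiEnsemble θ α M N, ∀ i, x i ∈ Set.Icc (0:ℝ) 1 := by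
  unfold jacobiEnsemble
  rw [raw_eq]
  exact Measure.ae_smul_measure ((withDensity_absolutelyContinuous _ _) (ae_cube N)) _

lemma integral_ens (θ α : ℝ) (M N : ℕ) (f : (Fin N → ℝ) → ℝ) :
    ∫ x, f x ∂jacobiEnsemble θ α M N = ((jacobiMeasureRaw θ α M N Set.univ)⁻¹).toReal *
      ∫ x, wt θ (θ * α) (θ * ((M:ℝ) - (N:ℝ)) + θ) N x * f x ∂cube N := by
  unfold jacobiEnsemble
  rw [integral_smul_measure, smul_eq_mul]
  congr 1
  rw [raw_eq, integral_withDensity_eq_integral_toReal_smul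
    (measurable_wt _ _ _ _).ennreal_ofReal (by simp)]
  refine integral_congr_ae ?_
  filter_upwards [ae_cube N] with x hx
  rw [ENNReal.toReal_ofReal (wt_nonneg _ _ _ _ _ hx), smul_eq_mul]

/-- Normalized power sums. -/
noncomputable def q (n k : ℕ) (x : Fin (n+1) → ℝ) : ℝ := pw (n+1) k x / (n+1)

lemma continuous_q (n k : ℕ) : Continuous (q n k) := (continuous_pw _ _).div_const _

lemma q_zero (n : ℕ) (x : Fin (n+1) → ℝ) : q n 0 x = 1 := by
  unfold q pw
  simp only [pow_zero, Finset.sum_const, Finset.card_univ, Fintype.card_fin, nsmul_eq_mul, mul_one]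
  push_cast
  exact div_self (by positivity)

lemma q_mem (n k : ℕ) (x : Fin (n+1) → ℝ) (hx : ∀ i, x i ∈ Set.Icc (0:ℝ) 1) :
    q n k x ∈ Set.Icc (0:ℝ) 1 := by
  unfold q pw
  constructor
  · exact div_nonneg (Finset.sum_nonneg fun i _ => pow_nonneg (hx i).1 _) (by positivity)
  · rw [div_le_one (by positivity)]
    calc _ ≤ ∑ i : Fin (n+1), (1:ℝ) := Finset.sum_le_sum fun i _ => pow_le_one₀ (hx i).1 (hx i).2
      _ = _ := by simp

lemma loop_ens {θ α : ℝ} {M : ℕ} (hθ : 0 < θ) (hα : 0 < α) (n : ℕ) (hM : n + 1 ≤ M) (k : ℕ)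
    (m : ℝ) :
    ∫ x, ((q n (k+1) x - m) * ((α / (n+1)) * (q n k x - q n (k+1) x)
        - (M / (n+1) - 1) * q n (k+1) x
        + (∑ l ∈ Finset.range (k+1), q n l x * q n (k-l) x
          - ∑ l ∈ Finset.range (k+2), q n l x * q n (k+1-l) x))
      + (1 / (n+1)) * ((q n (k+1) x - m) * ((k / θ) * (q n k x - q n (k+1) x) - q n (k+1) x
          - (k+1) * q n k x + (k+2) * q n (k+1) x)
        + (1 / (n+1)) * ((k+1) / θ * (q n (2*k+1) x - q n (2*k+2) x))))
      ∂jacobiEnsemble θ α M (n+1) = 0 := by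
  have h := loop_raw hθ (mul_pos hθ hα) (b_pos hθ hM) k n m
  rw [integral_ens]
  refine mul_eq_zero_of_right _ ?_
  have h2 := congrArg (fun z => (1 / (θ * ((n:ℝ)+1)^2)) * z) h
  simp only [mul_zero] at h2
  rw [← h2, ← integral_const_mul]
  congr 1; funext x
  conv_rhs => rw [mul_left_comm]
  congr 1
  have hn : (n:ℝ) + 1 ≠ 0 := by positivity
  have e : ∀ u v, q n u x * q n v x = pw (n+1) u x * pw (n+1) v x / ((n:ℝ)+1)^2 := by
    intro u v; unfold q; field_simp
  simp only [e, ← Finset.sum_div]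
  unfold q LL
  push_cast
  field_simp
  ring

end Jac

namespace Jac

open MeasureTheory Filter Topology

section conv

variable (μ : ∀ n : ℕ, Measure (Fin (n+1) → ℝ))

/-- Uniformly bounded sequence of random variables. -/
def Bd (X : ∀ n : ℕ, (Fin (n+1) → ℝ) → ℝ) : Prop :=
  (∀ n, AEStronglyMeasurable (X n) (μ n)) ∧ ∃ C, ∀ n, ∀ᵐ x ∂μ n, |X n x| ≤ C

/-- Bounded sequence converging in `L¹` to a constant. -/
def Conv (X : ∀ n : ℕ, (Fin (n+1) → ℝ) → ℝ) (c : ℝ) : Prop :=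
  Bd μ X ∧ Tendsto (fun n => ∫ x, |X n x - c| ∂μ n) atTop (𝓝 0)

variable {μ} {X Y : ∀ n : ℕ, (Fin (n+1) → ℝ) → ℝ} {c d : ℝ}

lemma Bd.add (hX : Bd μ X) (hY : Bd μ Y) : Bd μ (fun n x => X n x + Y n x) := by
  obtain ⟨hX1, C, hC⟩ := hX
  obtain ⟨hY1, D, hD⟩ := hY
  refine ⟨fun n => (hX1 n).add (hY1 n), C + D, fun n => ?_⟩
  filter_upwards [hC n, hD n] with x h1 h2
  exact (abs_add_le _ _).trans (add_le_add h1 h2)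

lemma Bd.mul (hX : Bd μ X) (hY : Bd μ Y) : Bd μ (fun n x => X n x * Y n x) := by
  obtain ⟨hX1, C, hC⟩ := hX
  obtain ⟨hY1, D, hD⟩ := hY
  refine ⟨fun n => (hX1 n).mul (hY1 n), C * D, fun n => ?_⟩
  filter_upwards [hC n, hD n] with x h1 h2
  rw [abs_mul]
  exact mul_le_mul h1 h2 (abs_nonneg _) ((abs_nonneg _).trans h1)

lemma Bd.const {u : ℕ → ℝ} (hu : Tendsto u atTop (𝓝 c)) : Bd μ (fun n _ => u n) := by
  refine ⟨fun n => aestronglyMeasurable_const, ?_⟩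
  obtain ⟨C, hC⟩ := (Metric.isBounded_range_of_tendsto u hu).exists_norm_le
  exact ⟨C, fun n => Eventually.of_forall fun x => hC _ ⟨n, rfl⟩⟩

lemma Bd.sub (hX : Bd μ X) (hY : Bd μ Y) : Bd μ (fun n x => X n x - Y n x) := by
  have h : Bd μ (fun n x => X n x + (-1) * Y n x) :=
    hX.add ((Bd.const (u := fun _ => (-1:ℝ)) tendsto_const_nhds).mul hY)
  simpa [sub_eq_add_neg] using h

variable [∀ n, IsProbabilityMeasure (μ n)]

lemma Bd.integrable (hX : Bd μ X) (n : ℕ) : Integrable (X n) (μ n) := by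
  obtain ⟨hX1, C, hC⟩ := hX
  exact Integrable.of_bound (hX1 n) C (hC n)

lemma Conv.const {u : ℕ → ℝ} (hu : Tendsto u atTop (𝓝 c)) : Conv μ (fun n _ => u n) c := by
  refine ⟨Bd.const hu, ?_⟩
  simp only [integral_const, probReal_univ, smul_eq_mul, one_mul]
  simpa using (hu.sub_const c).abs

lemma cst (c : ℝ) : Bd μ (fun _ _ => c) := Bd.const tendsto_const_nhds

lemma Bd.absi (hX : Bd μ X) (c : ℝ) (n : ℕ) : Integrable (fun x => |X n x - c|) (μ n) :=
  ((hX.sub (cst c)).integrable n).abs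

lemma Conv.add (hX : Conv μ X c) (hY : Conv μ Y d) :
    Conv μ (fun n x => X n x + Y n x) (c + d) := by
  refine ⟨hX.1.add hY.1, ?_⟩
  have h := hX.2.add hY.2
  rw [add_zero] at h
  refine squeeze_zero (fun n => integral_nonneg fun x => abs_nonneg _) (fun n => ?_) h
  rw [← integral_add (hX.1.absi c n) (hY.1.absi d n)]
  refine integral_mono ((hX.1.add hY.1).absi _ n) ((hX.1.absi c n).add (hY.1.absi d n)) fun x => ?_
  have := abs_add_le (X n x - c) (Y n x - d)
  calc |X n x + Y n x - (c + d)| = |(X n x - c) + (Y n x - d)| := by congr 1; ring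
    _ ≤ _ := this

lemma Conv.bd_mul (hX : Bd μ X) (hY : Conv μ Y 0) :
    Conv μ (fun n x => X n x * Y n x) 0 := by
  refine ⟨hX.mul hY.1, ?_⟩
  obtain ⟨C, hC⟩ := hX.2
  have h := hY.2.const_mul C
  rw [mul_zero] at h
  refine squeeze_zero (fun n => integral_nonneg fun x => abs_nonneg _) (fun n => ?_) h
  rw [← integral_const_mul]
  refine integral_mono_ae ((hX.mul hY.1).absi _ n) ((hY.1.absi _ n).const_mul C) ?_
  filter_upwards [hC n] with x hx
  simp only [sub_zero, abs_mul]
  exact mul_le_mul_of_nonneg_right hx (abs_nonneg _)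

lemma Conv.congr' (hX : Conv μ X c) (h : ∀ n x, X n x = Y n x) (hcd : c = d) : Conv μ Y d := by
  have : X = Y := by funext n x; exact h n x
  rw [← this, ← hcd]; exact hX

lemma Conv.mul (hX : Conv μ X c) (hY : Conv μ Y d) :
    Conv μ (fun n x => X n x * Y n x) (c * d) := by
  have h1 : Conv μ (fun n x => Y n x + -d) 0 :=
    (hY.add (Conv.const (u := fun _ => -d) tendsto_const_nhds)).congr' (fun _ _ => rfl) (by ring)
  have h2 : Conv μ (fun n x => X n x + -c) 0 :=
    (hX.add (Conv.const (u := fun _ => -c) tendsto_const_nhds)).congr' (fun _ _ => rfl) (by ring)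
  have h3 := ((Conv.bd_mul hX.1 h1).add (Conv.bd_mul (cst d) h2)).add
    (Conv.const (u := fun _ => c * d) tendsto_const_nhds)
  exact h3.congr' (fun n x => by ring) (by ring)

lemma Conv.sub (hX : Conv μ X c) (hY : Conv μ Y d) :
    Conv μ (fun n x => X n x - Y n x) (c - d) :=
  (hX.add ((Conv.const (u := fun _ => (-1:ℝ)) tendsto_const_nhds).mul hY)).congr'
    (fun n x => by ring) (by ring)

lemma Conv.sum {s : Finset ℕ} {Z : ℕ → ∀ n : ℕ, (Fin (n+1) → ℝ) → ℝ} {z : ℕ → ℝ}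
    (h : ∀ l ∈ s, Conv μ (Z l) (z l)) :
    Conv μ (fun n x => ∑ l ∈ s, Z l n x) (∑ l ∈ s, z l) := by
  classical
  induction s using Finset.induction_on with
  | empty => simpa using Conv.const (μ := μ) (u := fun _ => (0:ℝ)) tendsto_const_nhds
  | insert i s hi ih =>
    simp only [Finset.sum_insert hi]
    exact (h i (Finset.mem_insert_self _ _)).add
      (ih fun l hl => h l (Finset.mem_insert_of_mem hl))

lemma Conv.integral (hX : Conv μ X c) : Tendsto (fun n => ∫ x, X n x ∂μ n) atTop (𝓝 c) := by
  rw [tendsto_iff_norm_sub_tendsto_zero]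
  refine squeeze_zero (fun n => norm_nonneg _) (fun n => ?_) hX.2
  have : ∫ x, X n x ∂μ n - c = ∫ x, (X n x - c) ∂μ n := by
    rw [integral_sub (hX.1.integrable n) (integrable_const c)]; simp
  rw [this]
  exact norm_integral_le_integral_norm _

lemma Conv.of_sq (hX : Bd μ X)
    (h : Tendsto (fun n => ∫ x, (X n x - c) * (X n x - c) ∂μ n) atTop (𝓝 0)) : Conv μ X c := by
  refine ⟨hX, ?_⟩
  have h2 := h.sqrt
  rw [Real.sqrt_zero] at h2
  refine squeeze_zero (fun n => integral_nonneg fun x => abs_nonneg _) (fun n => ?_) h2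
  apply Real.le_sqrt_of_sq_le
  set t := ∫ x, |X n x - c| ∂μ n with ht
  have hsq : Integrable (fun x => (X n x - c) * (X n x - c)) (μ n) :=
    ((hX.sub (cst c)).mul (hX.sub (cst c))).integrable n
  have hab := hX.absi c n
  have h0 : 0 ≤ ∫ x, ((X n x - c) * (X n x - c) - 2 * t * |X n x - c| + t ^ 2) ∂μ n := by
    refine integral_nonneg fun x => ?_
    have := sq_nonneg (|X n x - c| - t)
    have h3 := abs_mul_abs_self (X n x - c)
    simp only [Pi.zero_apply]
    nlinarith
  have hs2 : Integrable (fun x => (X n x - c) * (X n x - c) - 2 * t * |X n x - c|) (μ n) :=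
    hsq.sub (hab.const_mul _)
  rw [integral_add hs2 (integrable_const _),
    integral_sub hsq (hab.const_mul _), integral_const_mul, ← ht] at h0
  simp at h0
  nlinarith

/-- Inductive step. -/
lemma conv_step (A B : ℕ → ℝ) (a b θ : ℝ) (hA : Tendsto A atTop (𝓝 a)) (hB : Tendsto B atTop (𝓝 b))
    (hA0 : ∀ n, 0 ≤ A n) (hB0 : ∀ n, 0 ≤ B n) (hq : ∀ l, Bd μ (fun n => q n l)) (m : ℕ → ℝ) (k : ℕ)
    (hloop : ∀ n : ℕ, ∫ x, ((q n (k+1) x - m (k+1)) * (A n * (q n k x - q n (k+1) x)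
        - (B n - 1) * q n (k+1) x
        + (∑ l ∈ Finset.range (k+1), q n l x * q n (k-l) x
          - ∑ l ∈ Finset.range (k+2), q n l x * q n (k+1-l) x))
      + (1 / (n+1)) * ((q n (k+1) x - m (k+1)) * ((k / θ) * (q n k x - q n (k+1) x) - q n (k+1) x
          - (k+1) * q n k x + (k+2) * q n (k+1) x)
        + (1 / (n+1)) * ((k+1) / θ * (q n (2*k+1) x - q n (2*k+2) x)))) ∂μ n = 0)
    (hm : (a + b + 1) * m (k+1) = a * m k + (∑ l ∈ Finset.range (k+1), m l * m (k-l)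
      - ∑ l ∈ Finset.range k, m (l+1) * m (k-l)))
    (ih : ∀ l ≤ k, Conv μ (fun n => q n l) (m l)) :
    Conv μ (fun n => q n (k+1)) (m (k+1)) := by
  refine Conv.of_sq (hq _) ?_
  have h1n : Tendsto (fun n : ℕ => 1 / ((n:ℝ)+1)) atTop (𝓝 0) :=
    tendsto_one_div_add_atTop_nhds_zero_nat
  have hF : Bd μ (fun n x => q n (k+1) x - m (k+1)) := (hq _).sub (cst _)
  have hAB : Tendsto (fun n => A n + B n + 1) atTop (𝓝 (a + b + 1)) := (hA.add hB).add_const 1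
  have hD : Conv μ (fun n x => A n * q n k x + (∑ l ∈ Finset.range (k+1), q n l x * q n (k-l) x
      - ∑ l ∈ Finset.range k, q n (l+1) x * q n (k-l) x) - (A n + B n + 1) * m (k+1)) 0 := by
    refine Conv.congr' (((((Conv.const hA).mul (ih k le_rfl)).add ((Conv.sum
      (z := fun l => m l * m (k-l)) fun l hl => ?_).sub
      (Conv.sum (z := fun l => m (l+1) * m (k-l)) fun l hl => ?_))).sub ((Conv.const hAB).mul
        (Conv.const (u := fun _ => m (k+1)) tendsto_const_nhds)))) (fun n x => rfl) ?_
    · have := Finset.mem_range.1 hl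
      exact (ih l (by omega)).mul (ih (k-l) (by omega))
    · have := Finset.mem_range.1 hl
      exact (ih (l+1) (by omega)).mul (ih (k-l) (by omega))
    · rw [hm]; ring
  have hR : Bd μ (fun n x => (q n (k+1) x - m (k+1)) *
      ((k / θ) * (q n k x - q n (k+1) x) - q n (k+1) x
          - (k+1) * q n k x + (k+2) * q n (k+1) x)
        + (1 / (n+1)) * ((k+1) / θ * (q n (2*k+1) x - q n (2*k+2) x))) := by
    refine (hF.mul ?_).add ((Bd.const h1n).mul ((cst _).mul ((hq _).sub (hq _))))
    exact ((((cst _).mul ((hq _).sub (hq _))).sub (hq _)).sub ((cst _).mul (hq _))).add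
      ((cst _).mul (hq _))
  have hR2 : Conv μ (fun n x => (1 / ((n:ℝ)+1)) * ((q n (k+1) x - m (k+1)) *
      ((k / θ) * (q n k x - q n (k+1) x) - q n (k+1) x
          - (k+1) * q n k x + (k+2) * q n (k+1) x)
        + (1 / (n+1)) * ((k+1) / θ * (q n (2*k+1) x - q n (2*k+2) x)))) 0 :=
    (Conv.bd_mul hR (Conv.const h1n)).congr' (fun n x => mul_comm _ _) rfl
  have hT := (Conv.bd_mul hF hD).add hR2
  have hTi := hT.integral
  rw [add_zero] at hTi
  refine squeeze_zero (fun n => integral_nonneg fun x => mul_self_nonneg _) (fun n => ?_) hTi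
  have hFF : Integrable (fun x => (q n (k+1) x - m (k+1)) * (q n (k+1) x - m (k+1))) (μ n) :=
    (hF.mul hF).integrable n
  have key : (A n + B n + 1) * ∫ x, (q n (k+1) x - m (k+1)) * (q n (k+1) x - m (k+1)) ∂μ n
      = ∫ x, ((q n (k+1) x - m (k+1)) * (A n * q n k x +
        (∑ l ∈ Finset.range (k+1), q n l x * q n (k-l) x
      - ∑ l ∈ Finset.range k, q n (l+1) x * q n (k-l) x) - (A n + B n + 1) * m (k+1)) +
      (1 / ((n:ℝ)+1)) * ((q n (k+1) x - m (k+1)) *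
      ((k / θ) * (q n k x - q n (k+1) x) - q n (k+1) x
          - (k+1) * q n k x + (k+2) * q n (k+1) x)
        + (1 / (n+1)) * ((k+1) / θ * (q n (2*k+1) x - q n (2*k+2) x)))) ∂μ n := by
    rw [← sub_eq_zero, ← neg_eq_zero, neg_sub, ← integral_const_mul,
      ← integral_sub (hT.1.integrable n) (hFF.const_mul _), ← hloop n]
    congr 1; funext x
    have e : ∑ l ∈ Finset.range (k+2), q n l x * q n (k+1-l) x =
        2 * q n (k+1) x + ∑ l ∈ Finset.range k, q n (l+1) x * q n (k-l) x := by
      rw [Finset.sum_range_succ, Finset.sum_range_succ']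
      simp only [Nat.add_sub_add_right, Nat.sub_self, Nat.sub_zero, q_zero]
      ring
    rw [e]
    ring
  rw [← key]
  have hpos : 0 ≤ ∫ x, (q n (k+1) x - m (k+1)) * (q n (k+1) x - m (k+1)) ∂μ n :=
    integral_nonneg fun x => mul_self_nonneg _
  nlinarith [mul_nonneg (hA0 n) hpos, mul_nonneg (hB0 n) hpos]

end conv

/-- The limiting moments. -/
noncomputable def mom (a b : ℝ) : ℕ → ℝ
  | 0 => 1
  | k+1 => (a * mom a b k + (∑ l : Fin (k+1), mom a b l * mom a b (k - l)
      - ∑ l : Fin k, mom a b (l+1) * mom a b (k-l))) / (a + b + 1)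
termination_by k => k
decreasing_by all_goals omega

lemma mom_zero (a b : ℝ) : mom a b 0 = 1 := by rw [mom]

lemma mom_succ (a b : ℝ) (h : a + b + 1 ≠ 0) (k : ℕ) :
    (a + b + 1) * mom a b (k+1) = a * mom a b k +
      (∑ l ∈ Finset.range (k+1), mom a b l * mom a b (k-l)
      - ∑ l ∈ Finset.range k, mom a b (l+1) * mom a b (k-l)) := by
  rw [mom, mul_div_cancel₀ _ h, Finset.sum_range, Finset.sum_range]

theorem conv_mom {θ : ℝ} (hθ : 0 < θ) (α : ℕ → ℝ) (M : ℕ → ℕ)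
    (hα : ∀ N : ℕ, 1 ≤ N → 0 < α N) (hM : ∀ N : ℕ, 1 ≤ N → N ≤ M N)
    (αhat Mhat : ℝ) (hαhat : 0 ≤ αhat)
    (hαlim : Tendsto (fun N : ℕ => α N / (N : ℝ)) atTop (𝓝 αhat))
    (hMlim : Tendsto (fun N : ℕ => (M N : ℝ) / (N : ℝ)) atTop (𝓝 Mhat)) (k : ℕ) :
    Tendsto (fun n : ℕ => ∫ x, q n k x ∂jacobiEnsemble θ (α (n+1)) (M (n+1)) (n+1)) atTop
      (𝓝 (mom αhat Mhat k)) := by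
  have hMh : 0 ≤ Mhat := ge_of_tendsto' hMlim fun n => by positivity
  set μ : ∀ n : ℕ, Measure (Fin (n+1) → ℝ) :=
    fun n => jacobiEnsemble θ (α (n+1)) (M (n+1)) (n+1) with hμ
  have : ∀ n, IsProbabilityMeasure (μ n) := fun n =>
    isProb hθ (hα _ (by omega)) (hM _ (by omega))
  have hq : ∀ l, Bd μ (fun n => q n l) := by
    intro l
    refine ⟨fun n => (continuous_q n l).aestronglyMeasurable, 1, fun n => ?_⟩
    filter_upwards [ae_ens θ (α (n+1)) (M (n+1)) (n+1)] with x hx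
    have := q_mem n l x hx
    rw [abs_of_nonneg this.1]; exact this.2
  have hA := (tendsto_add_atTop_iff_nat 1).2 hαlim
  have hB := (tendsto_add_atTop_iff_nat 1).2 hMlim
  have main : ∀ k, ∀ l ≤ k, Conv μ (fun n => q n l) (mom αhat Mhat l) := by
    intro k
    induction k with
    | zero =>
      intro l hl
      obtain rfl : l = 0 := by omega
      refine (Conv.const (u := fun _ => (1:ℝ)) tendsto_const_nhds).congr' (fun n x => ?_) ?_
      · rw [q_zero]
      · rw [mom_zero]
    | succ k ih =>
      intro l hl
      rcases Nat.lt_or_ge l (k+1) with h | h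
      · exact ih l (by omega)
      obtain rfl : l = k+1 := by omega
      refine conv_step _ _ αhat Mhat θ hA hB (fun n => ?_) (fun n => by positivity) hq _ k
        (fun n => ?_) (mom_succ _ _ (by positivity) k) ih
      · exact div_nonneg (hα _ (by omega)).le (by positivity)
      · have := loop_ens hθ (hα (n+1) (by omega)) n (hM (n+1) (by omega)) k (mom αhat Mhat (k+1))
        push_cast
        exact this
  exact (main k k le_rfl).integral

end Jac

namespace Jac

open MeasureTheory Filter Topology

open Metric in
lemma contour_core (k : ℕ) (m : ℕ → ℂ) (δ : ℝ) (h g : ℂ → ℂ)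
    (hh : DifferentiableOn ℂ h (ball (-1) δ)) (h0 : ∀ v ∈ ball (-1 : ℂ) δ, h v ≠ 0)
    (hg : DifferentiableOn ℂ g (ball (-1) δ))
    (hE : ∀ v ∈ ball (-1 : ℂ) δ, v + ∑ n ∈ Finset.range (k+1), m n * ((v+1) * h v)^n
      = (v+1)^(k+1) * g v) (ρ : ℝ) (hρ : 0 < ρ) (hρδ : ρ < δ) :
    (∮ v in C(-1, ρ), (((v+1) * h v)^k)⁻¹) = - (k * m k * (2 * Real.pi * Complex.I)) := by
  have hsub : closedBall (-1 : ℂ) ρ ⊆ ball (-1) δ := closedBall_subset_ball hρδ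
  have hsph : sphere (-1 : ℂ) ρ ⊆ ball (-1) δ := sphere_subset_closedBall.trans hsub
  have hdh := hh.deriv isOpen_ball
  have hdg := hg.deriv isOpen_ball
  have hw : ∀ v ∈ sphere (-1 : ℂ) ρ, v + 1 ≠ 0 := by
    intro v hv e
    have : v = -1 := eq_neg_of_add_eq_zero_left e
    subst this
    simp at hv
    linarith
  set hol : ℂ → ℂ := fun v => (h v ^ k)⁻¹ * ((k+1) * g v + (v+1) * deriv g v)
    - k * m k * (deriv h v / h v) with hhol
  have hold : DifferentiableOn ℂ hol (ball (-1) δ) := by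
    refine DifferentiableOn.sub (((hh.pow k).inv fun v hv => pow_ne_zero _ (h0 v hv)).mul ?_)
      (DifferentiableOn.const_mul (hdh.div hh h0) _)
    exact (hg.const_mul _).add (DifferentiableOn.mul (by fun_prop) hdg)
  have i1 : (∮ v in C(-1, ρ), hol v) = 0 := by
    refine Complex.circleIntegral_eq_zero_of_differentiable_on_off_countable hρ.le
      Set.countable_empty (hold.continuousOn.mono hsub) ?_
    intro z hz
    exact hold.differentiableAt (isOpen_ball.mem_nhds (hsub (ball_subset_closedBall hz.1)))
  have i2 : (∮ v in C(-1, ρ), (v - (-1 : ℂ))⁻¹) = 2 * Real.pi * Complex.I :=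
    circleIntegral.integral_sub_center_inv _ hρ.ne'
  have c1 : CircleIntegrable hol (-1) ρ :=
    (hold.continuousOn.mono hsph).circleIntegrable hρ.le
  have c2 : CircleIntegrable (fun v => k * m k * (v - (-1 : ℂ))⁻¹) (-1) ρ := by
    refine ContinuousOn.circleIntegrable hρ.le ?_
    refine ContinuousOn.mul continuousOn_const (ContinuousOn.inv₀ (by fun_prop) ?_)
    intro v hv
    simpa using hw v hv
  have c3 : CircleIntegrable (fun v => (((v+1) * h v)^k)⁻¹) (-1) ρ := by
    refine ContinuousOn.circleIntegrable hρ.le ?_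
    refine ContinuousOn.inv₀ (ContinuousOn.pow (ContinuousOn.mul (by fun_prop)
      (hh.continuousOn.mono hsph)) k) ?_
    intro v hv
    exact pow_ne_zero _ (mul_ne_zero (hw v hv) (h0 v (hsph hv)))
  have i3 : (∮ v in C(-1, ρ), ((((v+1) * h v)^k)⁻¹ - hol v + k * m k * (v - (-1 : ℂ))⁻¹)) = 0 := by
    refine circleIntegral.integral_eq_zero_of_hasDerivWithinAt (f := fun v =>
      ∑ n ∈ Finset.range k, (-(n * m n / ((n:ℂ) - k))) * ((v+1) * h v)^((n:ℤ) - k)) hρ.le ?_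
    intro v hv
    apply HasDerivAt.hasDerivWithinAt
    have hvb := hsph hv
    have nb := isOpen_ball.mem_nhds hvb
    have dh : HasDerivAt h (deriv h v) v := (hh.differentiableAt nb).hasDerivAt
    have dg : HasDerivAt g (deriv g v) v := (hg.differentiableAt nb).hasDerivAt
    have d1 : HasDerivAt (fun v : ℂ => v + 1) 1 v := (hasDerivAt_id v).add_const 1
    have df : HasDerivAt (fun v => (v+1) * h v) (1 * h v + (v+1) * deriv h v) v := d1.mul dh
    have w0 := hw v hv
    have hv0 := h0 v hvb
    have f0 : (v+1) * h v ≠ 0 := mul_ne_zero w0 hv0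
    have dE1 : HasDerivAt (fun v => v + ∑ n ∈ Finset.range (k+1), m n * ((v+1) * h v)^n)
        (1 + ∑ n ∈ Finset.range (k+1), m n * (n * ((v+1) * h v)^(n-1) *
          (1 * h v + (v+1) * deriv h v))) v :=
      (hasDerivAt_id v).add (HasDerivAt.fun_sum fun n _ => (df.pow n).const_mul _)
    have dE2 : HasDerivAt (fun v => (v+1)^(k+1) * g v)
        (((k+1 : ℕ) : ℂ) * (v+1)^(k+1-1) * 1 * g v + (v+1)^(k+1) * deriv g v) v :=
      (d1.pow (k+1)).mul dg
    have hEq := (dE1.congr_of_eventuallyEq (f₁ := fun v => (v+1)^(k+1) * g v)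
      (by filter_upwards [nb] with z hz using (hE z hz).symm)).unique dE2
    have dP : HasDerivAt (fun v => ∑ n ∈ Finset.range k, (-(n * m n / ((n:ℂ) - k))) *
        ((v+1) * h v)^((n:ℤ) - k)) (∑ n ∈ Finset.range k, (-(n * m n / ((n:ℂ) - k))) *
        ((((n:ℤ)-k : ℤ) : ℂ) * ((v+1) * h v)^((n:ℤ) - k - 1) * (1 * h v + (v+1) * deriv h v))) v :=
      HasDerivAt.fun_sum fun n _ => ((hasDerivAt_zpow _ _ (Or.inl f0)).comp v df).const_mul _
    refine dP.congr_deriv ?_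
    have e1 : ∀ n ∈ Finset.range k, (-(n * m n / ((n:ℂ) - k))) *
        ((((n:ℤ)-k : ℤ) : ℂ) * ((v+1) * h v)^((n:ℤ) - k - 1) * (1 * h v + (v+1) * deriv h v))
        = - ((((v+1) * h v)^k)⁻¹ * (m n * (n * ((v+1) * h v)^(n-1) *
          (1 * h v + (v+1) * deriv h v)))) := by
      intro n hn
      have hn' := Finset.mem_range.1 hn
      have nk : (n:ℂ) - k ≠ 0 := by
        rw [sub_ne_zero]; exact_mod_cast hn'.ne
      rcases Nat.eq_zero_or_pos n with rfl | hp
      · simp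
      have z : ((v+1) * h v)^((n:ℤ) - k - 1) = (((v+1) * h v)^k)⁻¹ * ((v+1) * h v)^(n-1) := by
        rw [show (n:ℤ) - k - 1 = -(k:ℤ) + ((n-1 : ℕ) : ℤ) by omega, zpow_add₀ f0, zpow_neg,
          zpow_natCast, zpow_natCast]
      rw [z]
      push_cast
      field_simp
    rw [Finset.sum_congr rfl e1, Finset.sum_neg_distrib, ← Finset.mul_sum]
    rw [Finset.sum_range_succ] at hEq
    set Sg := ∑ n ∈ Finset.range k, m n * (n * ((v+1) * h v)^(n-1) *
          (1 * h v + (v+1) * deriv h v)) with hSg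
    have hS : Sg = ((k+1 : ℕ) : ℂ) * (v+1)^(k+1-1) * 1 * g v + (v+1)^(k+1) * deriv g v
      - 1 - m k * (k * ((v+1) * h v)^(k-1) * (1 * h v + (v+1) * deriv h v)) := by
      linear_combination hEq
    rw [hS, hhol]
    rcases Nat.eq_zero_or_pos k with rfl | hp
    · simp
    obtain ⟨j, rfl⟩ : ∃ j, k = j + 1 := ⟨k-1, by omega⟩
    simp only [Nat.add_sub_cancel, sub_neg_eq_add, mul_pow]
    push_cast
    field_simp
    ring
  have c4 : CircleIntegrable (fun v => (((v+1) * h v)^k)⁻¹ - hol v) (-1) ρ := c3.sub c1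
  rw [circleIntegral.integral_add c4 c2, circleIntegral.integral_sub c3 c1, i1,
    circleIntegral.integral_const_mul, i2] at i3
  linear_combination i3

open Polynomial in
lemma poly_rec (a b : ℝ) (ha : a + b + 1 ≠ 0) (k : ℕ) :
    ∃ R : ℂ[X], ∀ u : ℂ, ∀ S : ℂ, S = ∑ n ∈ Finset.range (k+1), (mom a b n : ℂ) * u ^ n →
      u * S * (S + a) - (S - 1) * (S + a + b) = u^(k+1) * R.eval u := by
  set P : ℂ[X] := ∑ n ∈ Finset.range (k+1), C (mom a b n : ℂ) * X ^ n with hP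
  have hc : ∀ d ≤ k, P.coeff d = mom a b d := by
    intro d hd
    rw [hP, finsetSum_coeff]
    simp only [coeff_C_mul_X_pow]
    rw [Finset.sum_ite_eq]
    simp [Nat.lt_succ_of_le hd]
  have hm : ∀ d ≤ k, (P * P).coeff d =
      ∑ l ∈ Finset.range (d+1), (mom a b l : ℂ) * mom a b (d-l) := by
    intro d hd
    rw [coeff_mul, Finset.Nat.sum_antidiagonal_eq_sum_range_succ_mk]
    refine Finset.sum_congr rfl fun l hl => ?_
    have := Finset.mem_range.1 hl
    rw [hc l (by omega), hc (d-l) (by omega)]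
  have hdvd : (X : ℂ[X])^(k+1) ∣ X * (P * P) + C (a:ℂ) * (X * P) - P * P
      + C (1 - a - b : ℂ) * P + C (a + b : ℂ) := by
    rw [X_pow_dvd_iff]
    intro d hd
    rcases d with _ | d
    · simp only [coeff_add, coeff_sub, mul_coeff_zero, coeff_X_zero, coeff_C_zero,
        hc 0 (Nat.zero_le _), mom_zero]
      push_cast; ring
    · simp only [coeff_add, coeff_sub, coeff_C_mul, coeff_X_mul, coeff_C_succ]
      rw [hm d (by omega), hm (d+1) (by omega), hc d (by omega), hc (d+1) (by omega)]
      have h := congrArg (fun x : ℝ => (x : ℂ)) (mom_succ a b ha d)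
      push_cast at h
      have e2 : ∑ l ∈ Finset.range (d+1+1), (mom a b l : ℂ) * mom a b (d+1-l) =
          _ := Finset.sum_range_succ _ (d+1)
      rw [Finset.sum_range_succ' _ d] at e2
      simp only [Nat.add_sub_add_right, Nat.sub_self, Nat.sub_zero, mom_zero] at e2
      rw [e2]
      push_cast
      linear_combination -h
  obtain ⟨R, hR⟩ := hdvd
  refine ⟨R, fun u S hS => ?_⟩
  have hPe : P.eval u = S := by
    rw [hS, hP, eval_finsetSum]; simp
  have := congrArg (eval u) hR
  simp only [eval_add, eval_sub, eval_mul, eval_X, eval_C, eval_pow, hPe] at this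
  linear_combination this

open Metric in
lemma contour_small (a b : ℝ) (ha : 0 ≤ a) (hb : 0 ≤ b) (k : ℕ) :
    ∃ δ > 0, ∀ ρ : ℝ, 0 < ρ → ρ < δ →
    (∮ v in C(-1, ρ), (v / (v + 1) * ((v - (a : ℂ)) / (v - a - b))) ^ k)
      = - (k * mom a b k * (2 * Real.pi * Complex.I)) := by
  obtain ⟨R, hR⟩ := poly_rec a b (by positivity) k
  set h : ℂ → ℂ := fun v => (v - a - b) / (v * (v - a)) with hh
  set S : ℂ → ℂ := fun v => ∑ n ∈ Finset.range (k+1), (mom a b n : ℂ) * ((v+1) * h v) ^ n with hS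
  set A : ℂ → ℂ := fun v => v + 1 - S v - a - b - (v+1) * h v * (v - S v - a) with hA
  have re : ∀ v ∈ ball (-1 : ℂ) 1, v.re < 0 := by
    intro v hv
    rw [mem_ball, dist_eq_norm] at hv
    have := (Complex.abs_re_le_norm (v - -1)).trans_lt hv
    have := (abs_lt.1 this).2
    simp at this
    linarith
  have v0 : ∀ v ∈ ball (-1 : ℂ) 1, v ≠ 0 := by
    intro v hv e; have := re v hv; rw [e] at this; simp at this
  have va : ∀ v ∈ ball (-1 : ℂ) 1, v - a ≠ 0 := by
    intro v hv e
    have h1 := re v hv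
    have := congrArg Complex.re e
    simp at this; linarith
  have vb : ∀ v ∈ ball (-1 : ℂ) 1, v - a - b ≠ 0 := by
    intro v hv e
    have h1 := re v hv
    have := congrArg Complex.re e
    simp at this; linarith
  have dh : DifferentiableOn ℂ h (ball (-1) 1) := by
    refine DifferentiableOn.div (by fun_prop) (by fun_prop) fun v hv => ?_
    exact mul_ne_zero (v0 v hv) (va v hv)
  have df : DifferentiableOn ℂ (fun v => (v+1) * h v) (ball (-1) 1) :=
    DifferentiableOn.mul (by fun_prop) dh
  have dS : DifferentiableOn ℂ S (ball (-1) 1) :=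
    DifferentiableOn.fun_sum fun n _ => (df.pow n).const_mul _
  have dA : DifferentiableOn ℂ A (ball (-1) 1) := by
    simp only [hA]
    refine DifferentiableOn.sub ?_ (df.mul ?_)
    · exact ((DifferentiableOn.sub (by fun_prop) dS).sub (by fun_prop)).sub (by fun_prop)
    · exact (DifferentiableOn.sub (by fun_prop) dS).sub (by fun_prop)
  have A1 : A (-1) ≠ 0 := by
    have : S (-1) = 1 := by
      simp only [hS]
      rw [Finset.sum_range_succ']
      simp [mom_zero]
    simp only [hA, this]
    intro e
    have := congrArg Complex.re e
    simp at this
    linarith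
  have cA : ContinuousAt A (-1) :=
    (dA.differentiableAt (ball_mem_nhds _ one_pos)).continuousAt
  obtain ⟨ε, hε, hεA⟩ := Metric.eventually_nhds_iff_ball.1 (cA.eventually_ne A1)
  refine ⟨min ε 1, lt_min hε one_pos, fun ρ hρ hρδ => ?_⟩
  have s1 : ball (-1 : ℂ) (min ε 1) ⊆ ball (-1) 1 := ball_subset_ball (min_le_right _ _)
  have s2 : ball (-1 : ℂ) (min ε 1) ⊆ ball (-1) ε := ball_subset_ball (min_le_left _ _)
  have core := contour_core k (fun n => (mom a b n : ℂ)) (min ε 1) h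
    (fun v => h v ^ (k+1) * R.eval ((v+1) * h v) / A v) (dh.mono s1)
    (fun v hv => div_ne_zero (vb v (s1 hv)) (mul_ne_zero (v0 v (s1 hv)) (va v (s1 hv))))
    (by
      refine DifferentiableOn.div (DifferentiableOn.mul ((dh.mono s1).pow _) ?_) (dA.mono s1)
        fun v hv => hεA v (s2 hv)
      exact (Polynomial.differentiable R).comp_differentiableOn (df.mono s1))
    (by
      intro v hv
      have hAv := hεA v (s2 hv)
      have := hR ((v+1) * h v) (S v) rfl
      have hf : (v+1) * h v * (v * (v - a)) = (v+1) * (v - a - b) := by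
        simp only [hh]
        have := v0 v (s1 hv)
        have := va v (s1 hv)
        field_simp
      change v + S v = _
      rw [← mul_div_assoc, eq_div_iff hAv, ← mul_assoc, ← mul_pow, ← this]
      simp only [hA]
      linear_combination -hf) ρ hρ hρδ
  rw [← core]
  refine circleIntegral.integral_congr hρ.le fun v hv => ?_
  simp only [hh]
  rw [← inv_pow]
  congr 1
  rw [mul_inv, inv_div, div_eq_mul_inv, div_eq_mul_inv, div_eq_mul_inv]
  ring

open Metric in
theorem contour_eq (a b : ℝ) (ha : 0 ≤ a) (hb : 0 ≤ b) (k : ℕ) (hk : 0 < k) (r : ℝ) (hr : 0 < r)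
    (hr' : r < 1 + a + b) :
    -(1 / (k : ℂ)) * (2 * (Real.pi : ℂ) * Complex.I)⁻¹ *
    (∮ v in C(-1, r), (v / (v + 1) * ((v - (a : ℂ)) / (v - a - b))) ^ k) = mom a b k := by
  obtain ⟨δ, hδ, h⟩ := contour_small a b ha hb k
  set ρ := min (δ/2) r with hρ
  have ρ0 : 0 < ρ := lt_min (by linarith) hr
  have n1 : ∀ v ∈ closedBall (-1 : ℂ) r \ ball (-1) ρ, v + 1 ≠ 0 := by
    intro v hv e
    apply hv.2
    rw [eq_neg_of_add_eq_zero_left e]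
    exact mem_ball_self ρ0
  have n2 : ∀ v ∈ closedBall (-1 : ℂ) r \ ball (-1) ρ, v - a - b ≠ 0 := by
    intro v hv e
    have h1 := hv.1
    rw [mem_closedBall, dist_eq_norm] at h1
    have h2 := (Complex.abs_re_le_norm (v - -1)).trans h1
    have h3 := (abs_le.1 h2).2
    have := congrArg Complex.re e
    simp at this h3
    linarith
  have hann : (∮ v in C(-1, r), (v / (v + 1) * ((v - (a : ℂ)) / (v - a - b))) ^ k) =
      ∮ v in C(-1, ρ), (v / (v + 1) * ((v - (a : ℂ)) / (v - a - b))) ^ k := by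
    refine Complex.circleIntegral_eq_of_differentiable_on_annulus_off_countable ρ0
      (min_le_right _ _) Set.countable_empty ?_ ?_
    · refine ContinuousOn.pow (ContinuousOn.mul (ContinuousOn.div (by fun_prop) (by fun_prop) n1)
        (ContinuousOn.div (by fun_prop) (by fun_prop) n2)) k
    · intro z hz
      have hz' : z ∈ closedBall (-1 : ℂ) r \ ball (-1) ρ :=
        ⟨ball_subset_closedBall hz.1.1, fun h => hz.1.2 (ball_subset_closedBall h)⟩
      have := n1 z hz'
      have := n2 z hz'
      fun_prop (disch := assumption)
  rw [hann, h ρ ρ0 ((min_le_left _ _).trans_lt (by linarith))]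
  have : (k : ℂ) ≠ 0 := by exact_mod_cast hk.ne'
  have h2 : (2 * (Real.pi : ℂ) * Complex.I) ≠ 0 := Complex.two_pi_I_ne_zero
  field_simp

end Jac

/-- **Limit shape for a single β-Jacobi ensemble** (the `T = 1` case of the paper's
Theorem 1.2/5.1): `N⁻¹ E[𝔓_k(y)]` converges to the `k`-th moment of the limit measure,
written as a contour integral around `−1` not enclosing `α̂ + M̂`; the limit is
independent of `θ`. -/
theorem jacobi_law_of_large_numbers
    (θ : ℝ) (hθ : 0 < θ) (α : ℕ → ℝ) (M : ℕ → ℕ)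
    (hα : ∀ N : ℕ, 1 ≤ N → 0 < α N) (hM : ∀ N : ℕ, 1 ≤ N → N ≤ M N)
    (αhat Mhat : ℝ) (hαhat : 0 ≤ αhat)
    (hαlim : Filter.Tendsto (fun N : ℕ => α N / (N : ℝ)) Filter.atTop (nhds αhat))
    (hMlim : Filter.Tendsto (fun N : ℕ => (M N : ℝ) / (N : ℝ)) Filter.atTop (nhds Mhat))
    (k : ℕ) (hk : 0 < k) (r : ℝ) (hr : 0 < r) (hr' : r < 1 + αhat + Mhat) :
    Filter.Tendsto
      (fun N : ℕ => ((N : ℂ))⁻¹ *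
        ((∫ y, ∑ j : Fin N, (y j) ^ k ∂ jacobiEnsemble θ (α N) (M N) N : ℝ) : ℂ))
      Filter.atTop
      (nhds (-(1 / (k : ℂ)) * (2 * (Real.pi : ℂ) * Complex.I)⁻¹ *
        (∮ v in C(-1, r),
          (v / (v + 1) * ((v - (αhat : ℂ)) / (v - αhat - Mhat))) ^ k))) := by
  have hMh : 0 ≤ Mhat := ge_of_tendsto' hMlim fun n => by positivity
  rw [Jac.contour_eq αhat Mhat hαhat hMh k hk r hr hr']
  rw [← Filter.tendsto_add_atTop_iff_nat 1]
  have h := Jac.conv_mom hθ α M hα hM αhat Mhat hαhat hαlim hMlim k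
  refine ((Complex.continuous_ofReal.tendsto _).comp h).congr fun n => ?_
  simp only [Function.comp_apply, Jac.q, Jac.pw]
  rw [MeasureTheory.integral_div]
  push_cast
  rw [div_eq_inv_mul]
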